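/- Let h : [0,∞) → [0,∞) be a non-decreasing continuous function with lim_{ζ→∞} h(ζ) = ∞, let g(ζ) = ∫₀^ζ h(ζ′) dζ′, and fix γ̃ > 0 and Φ₀ > 0. Then there exists a function φ : (0,1] → [0,∞), depending only on h, γ̃ and Φ₀, with lim_{r↓0} φ(r) = 0, such that for every measurable function ζ : [0,1] → [0,∞) with ∫₀^1 ζ(v) dv ≤ Φ₀ and every r ∈ (0,1], one has ∫₀^r exp(−γ̃ ∫₀^v g(ζ(v′)) dv′) · ζ(v) dv ≤ φ(r). -/

import Mathlib

open Set Filter MeasureTheory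

/-!
Superlinearity of `g` means that for every `ε > 0` there is `M ε` with `x ≤ M ε + ε γ g(x)` for all
`x ≥ 0`. The discount factor `D(v) = exp (-γ ∫₀ᵛ g(ζ))` is absolutely continuous with
`D' = -γ D g(ζ)` almost everywhere, so `γ ∫₀ʳ D g(ζ) = 1 - D(r) ≤ 1` whatever `ζ` is. Integrating
`D ζ ≤ M ε + ε γ D g(ζ)` bounds the discounted proceeds by `ε + M ε r`, and the infimum of these
affine functions of `r` over `ε > 0` tends to `0` as `r ↓ 0`.
-/

open scoped Topology

theorem absolutelyContinuousOnInterval_comp_of_locallyLipschitz {X Y : Type*}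
    [SeminormedAddCommGroup X] [PseudoMetricSpace Y] {F : X → Y} {f : ℝ → X} {a b : ℝ}
    (hF : LocallyLipschitz F) (hf : AbsolutelyContinuousOnInterval f a b) :
    AbsolutelyContinuousOnInterval (fun x ↦ F (f x)) a b := by
  obtain ⟨K, hK⟩ := hF.locallyLipschitzOn.exists_lipschitzOnWith_of_compact
    (isCompact_uIcc.image_of_continuousOn hf.continuousOn)
  have hK_dist : ∀ x ∈ uIcc a b, ∀ y ∈ uIcc a b, dist (F (f x)) (F (f y)) ≤ K * dist (f x) (f y) :=
    fun x hx y hy ↦ hK.dist_le_mul _ (mem_image_of_mem f hx) _ (mem_image_of_mem f hy)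
  have h_lim := Tendsto.const_mul (K : ℝ) hf
  rw [mul_zero] at h_lim
  refine squeeze_zero' (Eventually.of_forall fun E ↦ Finset.sum_nonneg fun _ _ ↦ dist_nonneg)
    ?_ h_lim
  filter_upwards [mem_inf_of_right (mem_principal_self _)] with E hE
  rw [Finset.mul_sum]
  obtain ⟨h_mem, -⟩ := hE
  exact Finset.sum_le_sum fun i hi ↦ hK_dist _ (h_mem i hi).1 _ (h_mem i hi).2

/-- The discount factor at time `v` accumulated since time `a` at the rate `γ * f`. -/
noncomputable def discountFactor (γ : ℝ) (f : ℝ → ℝ) (a v : ℝ) : ℝ :=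
  Real.exp (-(γ * ∫ u in a..v, f u))

section DiscountFactor

variable {γ a b : ℝ} {f : ℝ → ℝ}

theorem discountFactor_pos (γ : ℝ) (f : ℝ → ℝ) (a v : ℝ) : 0 < discountFactor γ f a v :=
  Real.exp_pos _

theorem discountFactor_self (γ : ℝ) (f : ℝ → ℝ) (a : ℝ) : discountFactor γ f a a = 1 := by
  simp [discountFactor]

theorem discountFactor_le_one (hγ : 0 ≤ γ) (hab : a ≤ b) (hf : ∀ u ∈ Icc a b, 0 ≤ f u) :
    discountFactor γ f a b ≤ 1 :=
  Real.exp_le_one_iff.mpr <| neg_nonpos.mpr <|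
    mul_nonneg hγ (intervalIntegral.integral_nonneg hab hf)

theorem absolutelyContinuousOnInterval_discountFactor (γ : ℝ)
    (hf : IntervalIntegrable f volume a b) :
    AbsolutelyContinuousOnInterval (discountFactor γ f a) a b := by
  have h_exp : ContDiff ℝ 1 fun t : ℝ ↦ Real.exp (-(γ * t)) := by fun_prop
  exact absolutelyContinuousOnInterval_comp_of_locallyLipschitz
    (F := fun t ↦ Real.exp (-(γ * t))) h_exp.locallyLipschitz
    (hf.absolutelyContinuousOnInterval_intervalIntegral left_mem_uIcc)

theorem ae_hasDerivAt_discountFactor (γ : ℝ) (hf : IntervalIntegrable f volume a b) :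
    ∀ᵐ v, v ∈ uIcc a b →
      HasDerivAt (discountFactor γ f a) (-(γ * (discountFactor γ f a v * f v))) v := by
  filter_upwards [hf.ae_hasDerivAt_integral] with v hv hv_mem
  convert! ((hv hv_mem a left_mem_uIcc).const_mul γ).fun_neg.exp using 1
  simp only [discountFactor]
  ring

theorem mul_integral_discountFactor_mul (γ : ℝ) (hf : IntervalIntegrable f volume a b) :
    γ * ∫ v in a..b, discountFactor γ f a v * f v = 1 - discountFactor γ f a b := by
  have h_deriv : ∀ᵐ v, v ∈ uIoc a b →
      deriv (discountFactor γ f a) v = -(γ * (discountFactor γ f a v * f v)) := by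
    filter_upwards [ae_hasDerivAt_discountFactor γ hf] with v hv hv_mem
    exact (hv (uIoc_subset_uIcc hv_mem)).deriv
  have h_ftc := (absolutelyContinuousOnInterval_discountFactor γ hf).integral_deriv_eq_sub
  rw [intervalIntegral.integral_congr_ae h_deriv, intervalIntegral.integral_neg,
    intervalIntegral.integral_const_mul, discountFactor_self] at h_ftc
  linarith

theorem intervalIntegrable_discountFactor_mul {ζ : ℝ → ℝ} (γ : ℝ)
    (hf : IntervalIntegrable f volume a b) (hζ : IntervalIntegrable ζ volume a b) :
    IntervalIntegrable (fun v ↦ discountFactor γ f a v * ζ v) volume a b :=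
  hζ.continuousOn_mul (absolutelyContinuousOnInterval_discountFactor γ hf).continuousOn

theorem integral_discountFactor_mul_le {ζ : ℝ → ℝ} {ε M : ℝ} (hγ : 0 ≤ γ) (hε : 0 ≤ ε)
    (hM : 0 ≤ M) (hab : a ≤ b) (hf : IntervalIntegrable f volume a b)
    (hf_nonneg : ∀ v ∈ Icc a b, 0 ≤ f v) (hζ : IntervalIntegrable ζ volume a b)
    (hζ_le : ∀ v ∈ Icc a b, ζ v ≤ M + ε * γ * f v) :
    ∫ v in a..b, discountFactor γ f a v * ζ v ≤ ε + M * (b - a) := by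
  have h_le : ∀ v ∈ Icc a b,
      discountFactor γ f a v * ζ v ≤ M + ε * γ * (discountFactor γ f a v * f v) := by
    intro v hv
    have hD_pos := discountFactor_pos γ f a v
    have hD_le : discountFactor γ f a v ≤ 1 :=
      discountFactor_le_one hγ hv.1 fun u hu ↦ hf_nonneg u ⟨hu.1, hu.2.trans hv.2⟩
    calc discountFactor γ f a v * ζ v
        ≤ discountFactor γ f a v * (M + ε * γ * f v) := by gcongr; exact hζ_le v hv
      _ = discountFactor γ f a v * M + ε * γ * (discountFactor γ f a v * f v) := by ring
      _ ≤ M + ε * γ * (discountFactor γ f a v * f v) := by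
        gcongr
        exact mul_le_of_le_one_left hM hD_le
  have hDf := (intervalIntegrable_discountFactor_mul γ hf hf).const_mul (ε * γ)
  calc ∫ v in a..b, discountFactor γ f a v * ζ v
      ≤ ∫ v in a..b, (M + ε * γ * (discountFactor γ f a v * f v)) :=
        intervalIntegral.integral_mono_on hab (intervalIntegrable_discountFactor_mul γ hf hζ)
          (intervalIntegrable_const.add hDf) h_le
    _ = M * (b - a) + ε * (γ * ∫ v in a..b, discountFactor γ f a v * f v) := by
      rw [intervalIntegral.integral_add intervalIntegrable_const hDf,
        intervalIntegral.integral_const, intervalIntegral.integral_const_mul, smul_eq_mul]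
      ring
    _ = M * (b - a) + ε * (1 - discountFactor γ f a b) := by
      rw [mul_integral_discountFactor_mul γ hf]
    _ ≤ ε + M * (b - a) := by
      linarith [mul_nonneg hε (discountFactor_pos γ f a b).le]

end DiscountFactor

theorem tendsto_integral_div_atTop_of_tendsto_atTop {h : ℝ → ℝ} {a : ℝ}
    (h_int : ∀ x, a ≤ x → IntervalIntegrable h volume a x) (h_top : Tendsto h atTop atTop) :
    Tendsto (fun x ↦ (∫ z in a..x, h z) / x) atTop atTop := by
  refine tendsto_atTop.mpr fun K ↦ ?_
  obtain ⟨N, haN, hN⟩ : ∃ N, a ≤ N ∧ ∀ z, N ≤ z → K + 1 ≤ h z := by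
    obtain ⟨N, hN⟩ := (h_top.eventually_ge_atTop (K + 1)).exists_forall_of_atTop
    exact ⟨max N a, le_max_right N a, fun z hz ↦ hN z ((le_max_left N a).trans hz)⟩
  filter_upwards [eventually_gt_atTop 0, eventually_ge_atTop N,
    eventually_ge_atTop ((K + 1) * N - ∫ z in a..N, h z)] with x hx_pos hNx hx
  have h_int_Nx : IntervalIntegrable h volume N x :=
    (h_int N haN).symm.trans (h_int x (haN.trans hNx))
  have h_tail : (∫ _ in N..x, (K + 1)) ≤ ∫ z in N..x, h z :=
    intervalIntegral.integral_mono_on hNx intervalIntegrable_const h_int_Nx fun z hz ↦ hN z hz.1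
  rw [intervalIntegral.integral_const, smul_eq_mul] at h_tail
  rw [le_div_iff₀ hx_pos,
    ← intervalIntegral.integral_add_adjacent_intervals (h_int N haN) h_int_Nx]
  linarith

theorem exists_forall_le_add_mul_of_tendsto_div_atTop {g : ℝ → ℝ}
    (hg_nonneg : ∀ x, 0 ≤ x → 0 ≤ g x)
    (hg_top : Tendsto (fun x ↦ g x / x) atTop atTop) {κ : ℝ} (hκ : 0 < κ) :
    ∃ M, 0 ≤ M ∧ ∀ x, 0 ≤ x → x ≤ M + κ * g x := by
  obtain ⟨N, hN⟩ := (hg_top.eventually (eventually_ge_atTop κ⁻¹)).exists_forall_of_atTop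
  refine ⟨max N 0, le_max_right N 0, fun x hx ↦ ?_⟩
  have hκg : 0 ≤ κ * g x := mul_nonneg hκ.le (hg_nonneg x hx)
  rcases le_or_gt x (max N 0) with hxN | hNx
  · linarith
  · obtain ⟨hNx, hx_pos⟩ := max_lt_iff.mp hNx
    have h_ratio : κ⁻¹ * x ≤ g x := (le_div_iff₀ hx_pos).mp (hN x hNx.le)
    have : x ≤ κ * g x := (inv_mul_le_iff₀ hκ).mp h_ratio
    linarith [le_max_right N 0]

/-- The infimum over `ε > 0` of the affine functions `r ↦ ε + M ε * r`. Where `M` and `r` are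
non-negative the infimum is of a set bounded below, so its value is not the junk value of `⨅`. -/
noncomputable def affineEnvelope (M : ℝ → ℝ) (r : ℝ) : ℝ :=
  ⨅ ε : Ioi (0 : ℝ), (ε + M ε * r)

section AffineEnvelope

variable {M : ℝ → ℝ} {r : ℝ}

theorem le_affineEnvelope {x : ℝ} (hx : ∀ ε > 0, x ≤ ε + M ε * r) : x ≤ affineEnvelope M r :=
  le_ciInf fun ε ↦ hx ε ε.2

theorem affineEnvelope_nonneg (hM : ∀ ε > 0, 0 ≤ M ε) (hr : 0 ≤ r) : 0 ≤ affineEnvelope M r :=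
  le_affineEnvelope fun ε hε ↦ add_nonneg hε.le (mul_nonneg (hM ε hε) hr)

theorem affineEnvelope_le (hM : ∀ ε > 0, 0 ≤ M ε) (hr : 0 ≤ r) {ε : ℝ} (hε : 0 < ε) :
    affineEnvelope M r ≤ ε + M ε * r := by
  have h_bdd : BddBelow (range fun ε : Ioi (0 : ℝ) ↦ (ε : ℝ) + M ε * r) :=
    ⟨0, forall_mem_range.mpr fun ε ↦ add_nonneg ε.2.le (mul_nonneg (hM ε ε.2) hr)⟩
  exact ciInf_le h_bdd ⟨ε, hε⟩

theorem tendsto_affineEnvelope (hM : ∀ ε > 0, 0 ≤ M ε) :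
    Tendsto (affineEnvelope M) (𝓝[>] 0) (𝓝 0) := by
  refine tendsto_order.mpr ⟨fun c hc ↦ ?_, fun c hc ↦ ?_⟩
  · filter_upwards [self_mem_nhdsWithin] with r hr
    exact hc.trans_le (affineEnvelope_nonneg hM (le_of_lt hr))
  · have h_affine : Tendsto (fun r ↦ c / 2 + M (c / 2) * r) (𝓝[>] 0) (𝓝 (c / 2)) := by
      have h_cont : Continuous fun r : ℝ ↦ c / 2 + M (c / 2) * r := by fun_prop
      simpa using (h_cont.tendsto 0).mono_left nhdsWithin_le_nhds
    filter_upwards [self_mem_nhdsWithin, h_affine.eventually_lt_const (half_lt_self hc)]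
      with r hr hr_lt
    exact (affineEnvelope_le hM (le_of_lt hr) (half_pos hc)).trans_lt hr_lt

end AffineEnvelope

theorem discounted_proceeds_uniformly_small_general {g : ℝ → ℝ}
    (hg_nonneg : ∀ x, 0 ≤ x → 0 ≤ g x)
    (hg_top : Tendsto (fun x ↦ g x / x) atTop atTop) {γ : ℝ} (hγ : 0 < γ) :
    ∃ φ : ℝ → ℝ,
      (∀ r, 0 ≤ r → 0 ≤ φ r) ∧
      Tendsto φ (𝓝[>] 0) (𝓝 0) ∧
      ∀ (ζ : ℝ → ℝ) (r : ℝ), 0 ≤ r → (∀ v ∈ Icc 0 r, 0 ≤ ζ v) →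
        AEStronglyMeasurable ζ (volume.restrict (Icc 0 r)) →
        IntegrableOn (fun v ↦ g (ζ v)) (Icc 0 r) →
        IntervalIntegrable (fun v ↦ discountFactor γ (fun u ↦ g (ζ u)) 0 v * ζ v) volume 0 r ∧
        ∫ v in 0..r, discountFactor γ (fun u ↦ g (ζ u)) 0 v * ζ v ≤ φ r := by
  have h_affine : ∀ ε > 0, ∃ M, 0 ≤ M ∧ ∀ x, 0 ≤ x → x ≤ M + ε * γ * g x :=
    fun ε hε ↦
      exists_forall_le_add_mul_of_tendsto_div_atTop hg_nonneg hg_top (mul_pos hε hγ)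
  choose! M hM_nonneg hM using h_affine
  refine ⟨affineEnvelope M, fun r ↦ affineEnvelope_nonneg hM_nonneg,
    tendsto_affineEnvelope hM_nonneg, fun ζ r hr hζ_nonneg hζ_meas hgζ ↦ ?_⟩
  have hζ : IntegrableOn ζ (Icc 0 r) := by
    have h_dom : IntegrableOn (fun v ↦ M 1 + 1 * γ * g (ζ v)) (Icc 0 r) :=
      continuousOn_const.integrableOn_Icc.add (hgζ.const_mul (1 * γ))
    refine h_dom.mono' hζ_meas (ae_restrict_of_forall_mem measurableSet_Icc fun v hv ↦ ?_)
    exact (Real.norm_of_nonneg (hζ_nonneg v hv)).trans_le (hM 1 one_pos _ (hζ_nonneg v hv))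
  rw [← uIcc_of_le hr] at hgζ hζ
  refine ⟨intervalIntegrable_discountFactor_mul γ hgζ.intervalIntegrable hζ.intervalIntegrable,
    le_affineEnvelope fun ε hε ↦ ?_⟩
  simpa using integral_discountFactor_mul_le hγ.le hε.le (hM_nonneg ε hε) hr
    hgζ.intervalIntegrable (fun v hv ↦ hg_nonneg _ (hζ_nonneg v hv)) hζ.intervalIntegrable
    fun v hv ↦ hM ε hε _ (hζ_nonneg v hv)

/-- Deterministic-control version of Lemma 7.5 (eval_0): when `h(∞) = ∞`
there exists a function `φ : (0,1] → [0,∞)`, depending only on `h`, `γ̃`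
and `Φ₀`, with `φ(r) → 0` as `r ↓ 0`, such that the discounted proceeds of
every admissible selling rate `ζ` (non-negative, measurable, with
`∫₀^1 ζ ≤ Φ₀`) over `[0,r]` are bounded by `φ(r)`:
`∫₀^r exp(−γ̃ ∫₀^v g(ζ(v′)) dv′) ζ(v) dv ≤ φ(r)`. -/
theorem discounted_proceeds_uniformly_small
    (h : ℝ → ℝ)
    (h_nonneg : ∀ ζ, 0 ≤ ζ → 0 ≤ h ζ)
    (h_mono : MonotoneOn h (Set.Ici 0))
    (h_cont : ContinuousOn h (Set.Ici 0))
    (h_top : Tendsto h atTop atTop)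
    (g : ℝ → ℝ) (hg : ∀ ζ, g ζ = ∫ z in (0:ℝ)..ζ, h z)
    (γt Φ₀ : ℝ) (hγt : 0 < γt) (hΦ₀ : 0 < Φ₀) :
    ∃ φ : ℝ → ℝ,
      (∀ r ∈ Set.Ioc (0:ℝ) 1, 0 ≤ φ r) ∧
      Tendsto φ (nhdsWithin 0 (Set.Ioi 0)) (nhds 0) ∧
      ∀ ζ : ℝ → ℝ, Measurable ζ → (∀ v, 0 ≤ ζ v) →
        IntegrableOn ζ (Set.Icc 0 1) →
        IntegrableOn (fun v => g (ζ v)) (Set.Icc 0 1) →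
        (∫ v in (0:ℝ)..1, ζ v) ≤ Φ₀ →
        ∀ r ∈ Set.Ioc (0:ℝ) 1,
          (∫ v in (0:ℝ)..r, Real.exp (-(γt * ∫ v' in (0:ℝ)..v, g (ζ v'))) * ζ v) ≤ φ r := by
  obtain rfl : g = fun x ↦ ∫ z in (0 : ℝ)..x, h z := funext hg
  obtain ⟨φ, hφ_nonneg, hφ_lim, hφ⟩ := discounted_proceeds_uniformly_small_general
    (fun x hx ↦ intervalIntegral.integral_nonneg hx fun z hz ↦ h_nonneg z hz.1)
    (tendsto_integral_div_atTop_of_tendsto_atTop (fun x hx ↦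
      (h_mono.mono (uIcc_of_le hx ▸ Icc_subset_Ici_self)).intervalIntegrable) h_top) hγt
  exact ⟨φ, fun r hr ↦ hφ_nonneg r hr.1.le, hφ_lim, fun ζ hζ hζ_nonneg _ hgζ _ r hr ↦
    (hφ ζ r hr.1.le (fun v _ ↦ hζ_nonneg v) hζ.aestronglyMeasurable
      (hgζ.mono_set (Icc_subset_Icc_right hr.2))).2⟩
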